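/- Let p be a prime and let G be a nonabelian group of order p^3. Then cod(G) = {1, p, p^2}. -/

import Mathlib

open CategoryTheory

/-- The degree of a complex representation: the dimension of the underlying vector space. -/
noncomputable def repDegree {G : Type} [Group G] (V : FDRep ℂ G) : ℕ :=
  Module.finrank ℂ V

/-- The kernel of a representation of `G`, as a subgroup of `G`. -/
noncomputable def repKer {G : Type} [Group G] (V : FDRep ℂ G) : Subgroup G :=
  MonoidHom.ker (Representation.asGroupHom V.ρ)

/-- The codegree of a character: `|G : ker χ| / χ(1)`. -/
noncomputable def codegree {G : Type} [Group G] (V : FDRep ℂ G) : ℕ :=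
  (repKer V).index / repDegree V

/-- `cod(G)`: the set of codegrees of the irreducible complex characters of `G`. -/
def codSet (G : Type) [Group G] : Set ℕ :=
  {m | ∃ V : FDRep ℂ G, Simple V ∧ codegree V = m}

/-- `cd(G)`: the set of degrees of the irreducible complex characters of `G`. -/
def cdSet (G : Type) [Group G] : Set ℕ :=
  {m | ∃ V : FDRep ℂ G, Simple V ∧ repDegree V = m}

/-- The nilpotency class of `G`: the least `n` with `upperCentralSeries G n = ⊤`. -/
noncomputable def nilClass (G : Type) [Group G] : ℕ :=
  sInf {n | upperCentralSeries G n = ⊤}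

open scoped Classical in
/-- The character of `G` induced from the linear character `lam` of the subgroup `H`. -/
noncomputable def indLinearChar {G : Type} [Group G] [Fintype G] (H : Subgroup G)
    (lam : H →* ℂˣ) : G → ℂ :=
  fun g => (∑ x : G, if h : x * g * x⁻¹ ∈ H then ((lam ⟨x * g * x⁻¹, h⟩ : ℂˣ) : ℂ) else 0) /
    (Nat.card H : ℂ)

/-- A finite group is normally monomial if every irreducible complex character is induced
from a linear character of a normal subgroup. -/
def NormallyMonomial (G : Type) [Group G] [Fintype G] : Prop :=
  ∀ V : FDRep ℂ G, Simple V → ∃ (H : Subgroup G) (lam : H →* ℂˣ),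
    H.Normal ∧ FDRep.character V = indLinearChar H lam


theorem repKer_mem {G : Type} [Group G] (V : FDRep ℂ G) (g : G) :
    g ∈ repKer V ↔ V.ρ g = 1 := by
  unfold repKer
  rw [MonoidHom.mem_ker, ← Units.val_inj, Representation.asGroupHom_apply]
  rfl

theorem index_of_ne_bot {p : ℕ} (hp : p.Prime) {G : Type} [Group G] [Fintype G]
    (hcard : Fintype.card G = p ^ 3) (N : Subgroup G) (hN : N ≠ ⊥) :
    N.index = 1 ∨ N.index = p ∨ N.index = p ^ 2 := by
  have h1 : N.index ∣ p ^ 3 := by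
    rw [← hcard, ← Nat.card_eq_fintype_card]; exact N.index_dvd_card
  obtain ⟨k, hk, hk'⟩ := (Nat.dvd_prime_pow hp).1 h1
  interval_cases k
  · left; simpa using hk'
  · right; left; simpa using hk'
  · right; right; exact hk'
  · exfalso
    have := N.card_mul_index
    rw [hk', Nat.card_eq_fintype_card (α := G), hcard] at this
    have h3 : 0 < p ^ 3 := pow_pos hp.pos 3
    apply hN
    rw [← Subgroup.card_eq_one]
    exact Nat.eq_of_mul_eq_mul_right h3 (by simpa using this)

theorem comm_of_normal {p : ℕ} (hp : p.Prime) {G : Type} [Group G] [Fintype G]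
    (hcard : Fintype.card G = p ^ 3) (N : Subgroup G) [N.Normal] (hN : N ≠ ⊥) (a b : G) :
    (a * b)⁻¹ * (b * a) ∈ N := by
  have := Fact.mk hp
  have hc : ∀ x y : G ⧸ N, x * y = y * x := by
    rcases index_of_ne_bot hp hcard N hN with h | h | h
    · have : Subsingleton (G ⧸ N) := by
        rw [Subgroup.index_eq_one] at h
        subst h
        exact QuotientGroup.subsingleton_quotient_top
      intro x y; exact Subsingleton.elim _ _
    · have : IsCyclic (G ⧸ N) := isCyclic_of_prime_card (p := p) h
      intro x y
      exact (IsCyclic.isMulCommutative (α := G ⧸ N)).is_comm.comm x y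
    · exact (IsPGroup.isMulCommutative_of_card_eq_prime_sq (p := p) (G := G ⧸ N) h).is_comm.comm
  rw [← QuotientGroup.eq]
  simpa using hc (a : G ⧸ N) (b : G ⧸ N)

theorem card_center_p {p : ℕ} (hp : p.Prime) {G : Type} [Group G] [Fintype G]
    (hcard : Fintype.card G = p ^ 3) (hna : ¬ ∀ a b : G, a * b = b * a) :
    Subgroup.center G ≠ ⊥ ∧ Nat.card (Subgroup.center G) = p := by
  have := Fact.mk hp
  have hG : IsPGroup p G := IsPGroup.of_card (n := 3) (by rw [Nat.card_eq_fintype_card, hcard])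
  have : Nontrivial G := by
    by_contra h
    rw [not_nontrivial_iff_subsingleton] at h
    exact hna fun a b => Subsingleton.elim _ _
  have hb : Subgroup.center G ≠ ⊥ := hG.bot_lt_center.ne'
  refine ⟨hb, ?_⟩
  have hcyc : ¬ IsCyclic (G ⧸ Subgroup.center G) := by
    intro h
    exact hna (isMulCommutative_of_isCyclic_quotient_center_self G).is_comm.comm
  have hm := (Subgroup.center G).card_mul_index
  rw [Nat.card_eq_fintype_card (α := G), hcard] at hm
  rcases index_of_ne_bot hp hcard _ hb with h | h | h
  · exfalso; apply hcyc
    exact isCyclic_of_card_dvd_prime (p := p) (by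
      change (Subgroup.center G).index ∣ p
      rw [h]; exact one_dvd _)
  · exact absurd (isCyclic_of_prime_card (p := p) h) hcyc
  · rw [h] at hm
    exact Nat.eq_of_mul_eq_mul_right (pow_pos hp.pos 2) (by rw [hm]; ring)

theorem schur_scalar {G : Type} [Group G] (V : FDRep ℂ G) (hV : Simple V) (z : G)
    (hz : ∀ g, V.ρ g * V.ρ z = V.ρ z * V.ρ g) : ∃ c : ℂ, V.ρ z = c • 1 := by
  let f : V ⟶ V := ⟨FGModuleCat.ofHom (V.ρ z), fun g => by
    ext x
    exact (LinearMap.congr_fun (hz g) x).symm⟩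
  obtain ⟨c, hc⟩ := endomorphism_simple_eq_smul_id ℂ f
  refine ⟨c, ?_⟩
  have : (c • (𝟙 V : V ⟶ V)).hom.hom.hom = f.hom.hom.hom := by rw [hc]
  exact this.symm

theorem char_scalar {G : Type} [Group G] (V : FDRep ℂ G) (hV : Simple V) (z : G)
    (hz : ∀ g, V.ρ g * V.ρ z = V.ρ z * V.ρ g) :
    V.character z * V.character z⁻¹ = (repDegree V : ℂ) ^ 2 := by
  obtain ⟨c, hc⟩ := schur_scalar V hV z hz
  obtain ⟨d, hd⟩ := schur_scalar V hV z⁻¹ (fun g => by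
    have h1 : V.ρ z⁻¹ * V.ρ z = 1 := by rw [← map_mul]; simp
    have h2 : V.ρ z * V.ρ z⁻¹ = 1 := by rw [← map_mul]; simp
    calc V.ρ g * V.ρ z⁻¹ = V.ρ z⁻¹ * (V.ρ z * V.ρ g) * V.ρ z⁻¹ := by
          rw [← mul_assoc, h1, one_mul]
      _ = V.ρ z⁻¹ * V.ρ g * (V.ρ z * V.ρ z⁻¹) := by rw [← hz g]; simp only [mul_assoc]
      _ = _ := by rw [h2, mul_one])
  have h1 : V.ρ z * V.ρ z⁻¹ = 1 := by rw [← map_mul]; simp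
  have e : (c * d) • (1 : V →ₗ[ℂ] V) = 1 := by
    rw [hc, hd, smul_mul_smul_comm, one_mul] at h1; exact h1
  have et := congrArg (LinearMap.trace ℂ V) e
  rw [map_smul, LinearMap.trace_one, smul_eq_mul] at et
  unfold FDRep.character repDegree
  rw [hc, hd, map_smul, map_smul, LinearMap.trace_one, smul_eq_mul, smul_eq_mul]
  linear_combination (Module.finrank ℂ V : ℂ) * et

theorem char_sum {G : Type} [Group G] [Fintype G] (V : FDRep ℂ G) (hV : Simple V) :
    ∑ g : G, V.character g * V.character g⁻¹ = (Fintype.card G : ℂ) := by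
  rw [(FDRep.simple_iff_char_is_norm_one V).1 hV, Nat.card_eq_fintype_card]

theorem degree_one {G : Type} [Group G] [Fintype G] (V : FDRep ℂ G) (hV : Simple V)
    (h : ∀ a b, V.ρ a * V.ρ b = V.ρ b * V.ρ a) : repDegree V = 1 := by
  have hs := char_sum V hV
  rw [Finset.sum_congr rfl (fun g _ => char_scalar V hV g (fun a => h a g))] at hs
  rw [Finset.sum_const, nsmul_eq_mul, Finset.card_univ] at hs
  have h0 : (Fintype.card G : ℂ) ≠ 0 := by exact_mod_cast Fintype.card_ne_zero
  have h1 : (repDegree V : ℂ) ^ 2 = 1 := by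
    apply mul_left_cancel₀ h0; rw [hs, mul_one]
  have h2 : repDegree V ^ 2 = 1 := by exact_mod_cast h1
  simpa using h2

theorem degree_p {p : ℕ} (hp : p.Prime) {G : Type} [Group G] [Fintype G]
    (hcard : Fintype.card G = p ^ 3) (hna : ¬ ∀ a b : G, a * b = b * a)
    (V : FDRep ℂ G) (hV : Simple V) (hK : repKer V = ⊥) : repDegree V = p := by
  classical
  obtain ⟨hb, hc⟩ := card_center_p hp hcard hna
  have hs := char_sum V hV
  have key : ∀ g : G, V.character g * V.character g⁻¹ =
      if g ∈ Subgroup.center G then (repDegree V : ℂ) ^ 2 else 0 := by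
    intro g
    split_ifs with hg
    · apply char_scalar V hV g
      intro a
      rw [← map_mul, ← map_mul, Subgroup.mem_center_iff.1 hg a]
    · have : ∃ h, h * g ≠ g * h := by
        by_contra hcon
        push Not at hcon
        exact hg (Subgroup.mem_center_iff.2 hcon)
      obtain ⟨h, hh⟩ := this
      set z := (g * h)⁻¹ * (h * g) with hz
      have hzc : z ∈ Subgroup.center G := comm_of_normal hp hcard _ hb g h
      have hz1 : z ≠ 1 := by
        intro h1
        rw [hz, inv_mul_eq_one] at h1
        exact hh h1.symm
      obtain ⟨c, hcz⟩ := schur_scalar V hV z (fun a => by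
        rw [← map_mul, ← map_mul, Subgroup.mem_center_iff.1 hzc a])
      have hc1 : c ≠ 1 := by
        rintro rfl
        have : z ∈ repKer V := by rw [repKer_mem, hcz, one_smul]
        rw [hK, Subgroup.mem_bot] at this
        exact hz1 this
      have hconj : h * g * h⁻¹ = g * z := by
        have e1 : h * g = g * h * z := by rw [hz]; group
        rw [e1, mul_assoc g h z, Subgroup.mem_center_iff.1 hzc h]; group
      have e2 : V.character g = c * V.character g := by
        conv_lhs => rw [← FDRep.char_conj V g h, hconj]
        unfold FDRep.character
        rw [map_mul, hcz, mul_smul_comm, mul_one, map_smul, smul_eq_mul]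
      have e3 : V.character g = 0 := by
        have : (c - 1) * V.character g = 0 := by linear_combination -e2
        rcases mul_eq_zero.1 this with h | h
        · exact absurd (sub_eq_zero.1 h) hc1
        · exact h
      rw [e3, zero_mul]
  rw [Finset.sum_congr rfl (fun g _ => key g), ← Finset.sum_filter, Finset.sum_const,
    nsmul_eq_mul] at hs
  have hcc : (Finset.univ.filter (fun g : G => g ∈ Subgroup.center G)).card = p := by
    rw [← hc, Nat.card_eq_fintype_card, Fintype.card_subtype]
  rw [hcc, hcard] at hs
  have h2 : p * repDegree V ^ 2 = p * p ^ 2 := by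
    have : p * repDegree V ^ 2 = p ^ 3 := by exact_mod_cast hs
    rw [this]; ring
  have h3 := Nat.eq_of_mul_eq_mul_left hp.pos h2
  exact Nat.pow_left_injective (n := 2) (by norm_num) h3

theorem rho_comm {p : ℕ} (hp : p.Prime) {G : Type} [Group G] [Fintype G]
    (hcard : Fintype.card G = p ^ 3) (V : FDRep ℂ G) (hK : repKer V ≠ ⊥) (a b : G) :
    V.ρ a * V.ρ b = V.ρ b * V.ρ a := by
  have : (repKer V).Normal := by unfold repKer; infer_instance
  have h := comm_of_normal hp hcard (repKer V) hK b a
  rw [repKer_mem] at h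
  rw [← map_mul, ← map_mul]
  have : a * b = (b * a) * ((b * a)⁻¹ * (a * b)) := by group
  rw [this, map_mul, h, mul_one]

/-- The one-dimensional representation attached to a linear character. -/
noncomputable def linRep {G : Type} [Group G] (f : G →* ℂˣ) : Representation ℂ G ℂ where
  toFun g := (f g : ℂ) • 1
  map_one' := by simp
  map_mul' a b := by
    rw [smul_mul_smul_comm, map_mul, Units.val_mul, one_mul]

theorem linRep_spec {G : Type} [Group G] [Fintype G] (f : G →* ℂˣ) :
    Simple (FDRep.of (linRep f)) ∧ codegree (FDRep.of (linRep f)) = f.ker.index := by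
  have hd : repDegree (FDRep.of (linRep f)) = 1 := Module.finrank_self ℂ
  constructor
  · rw [FDRep.simple_iff_char_is_norm_one]
    have : ∀ g, (FDRep.of (linRep f)).character g = f g := by
      intro g
      change LinearMap.trace ℂ ℂ ((f g : ℂ) • 1) = _
      rw [map_smul, LinearMap.trace_one]; simp
    simp [this]
  · unfold codegree
    rw [hd, Nat.div_one]
    congr 1
    ext g
    rw [repKer_mem, MonoidHom.mem_ker]
    change ((f g : ℂ) • (1 : ℂ →ₗ[ℂ] ℂ)) = 1 ↔ _
    constructor
    · intro h
      have := LinearMap.congr_fun h 1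
      simpa using this
    · intro h; simp [h]

theorem exists_lin {p : ℕ} (hp : p.Prime) {G : Type} [Group G] [Fintype G]
    (hcard : Fintype.card G = p ^ 3) : ∃ f : G →* ℂˣ, f.ker.index = p := by
  have := Fact.mk hp
  obtain ⟨N, hN⟩ := Sylow.exists_subgroup_card_pow_prime (G := G) p (n := 2)
    (by rw [Nat.card_eq_fintype_card, hcard]; exact pow_dvd_pow p (by norm_num))
  have hi : N.index = p := by
    have := N.card_mul_index
    rw [hN, Nat.card_eq_fintype_card, hcard] at this
    exact Nat.eq_of_mul_eq_mul_left (pow_pos hp.pos 2) (by rw [this]; ring)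
  have : N.Normal := Subgroup.normal_of_index_eq_minFac_card (by
    rw [hi, Nat.card_eq_fintype_card, hcard, hp.pow_minFac (by norm_num)])
  have hr : Nat.card (rootsOfUnity p ℂ) = p := by
    rw [Complex.card_rootsOfUnity]
  let e : (G ⧸ N) ≃* rootsOfUnity p ℂ := mulEquivOfPrimeCardEq (p := p) hi hr
  refine ⟨(rootsOfUnity p ℂ).subtype.comp (e.toMonoidHom.comp (QuotientGroup.mk' N)), ?_⟩
  refine Eq.trans ?_ hi
  congr 1
  ext g
  simp [MonoidHom.mem_ker]

theorem exists_of_rep {G : Type} [Group G] [Fintype G] (a b : G) (M : Type) [AddCommGroup M]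
    [Module ℂ M] [Module.Finite ℂ M] (ρ : Representation ℂ G M) (hirr : ρ.IsIrreducible)
    (v : M) (hv : ρ (a * b) v ≠ ρ (b * a) v) :
    ∃ V : FDRep ℂ G, Simple V ∧ V.ρ a * V.ρ b ≠ V.ρ b * V.ρ a := by
  classical
  have : NeZero (Nat.card G : ℂ) := ⟨by exact_mod_cast Nat.card_pos.ne'⟩
  refine ⟨FDRep.of ρ, ?_, ?_⟩
  · rw [FDRep.simple_iff_char_is_norm_one]
    have := invertibleOfNonzero (NeZero.ne (Nat.card G : ℂ))
    have h := Representation.char_orthonormal ρ ρ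
    rw [if_pos ⟨Representation.Equiv.refl ρ⟩, inv_mul_eq_one₀ (NeZero.ne _)] at h
    exact h.symm
  · intro h
    change ρ a * ρ b = ρ b * ρ a at h
    rw [← map_mul, ← map_mul] at h
    exact hv (LinearMap.congr_fun h v)

theorem exists_of_module {G : Type} [Group G] [Fintype G] (a b : G) (M : Type) [AddCommGroup M]
    [Module (MonoidAlgebra ℂ G) M] [IsSimpleModule (MonoidAlgebra ℂ G) M] (v : M)
    (hv : MonoidAlgebra.of ℂ G (a * b) • v ≠ MonoidAlgebra.of ℂ G (b * a) • v) :
    ∃ V : FDRep ℂ G, Simple V ∧ V.ρ a * V.ρ b ≠ V.ρ b * V.ρ a := by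
  have hirr := (Representation.isSimpleModule_iff_irreducible_ofModule (k := ℂ) (G := G) M).1
    inferInstance
  refine @exists_of_rep G _ _ a b (RestrictScalars ℂ (MonoidAlgebra ℂ G) M)
    _ (RestrictScalars.module ℂ (MonoidAlgebra ℂ G) M) ?_
    (Representation.ofModule (k := ℂ) (G := G) M) hirr v ?_
  · let : Module ℂ M := Module.compHom M (algebraMap ℂ (MonoidAlgebra ℂ G))
    have : IsScalarTower ℂ (MonoidAlgebra ℂ G) M := IsScalarTower.of_compHom _ _ _
    have h : Module.Finite ℂ M := Module.Finite.trans (MonoidAlgebra ℂ G) _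
    exact h
  · exact hv

theorem exists_noncomm {G : Type} [Group G] [Fintype G] (a b : G) (hab : a * b ≠ b * a) :
    ∃ V : FDRep ℂ G, Simple V ∧ V.ρ a * V.ρ b ≠ V.ρ b * V.ρ a := by
  classical
  let x : (MonoidAlgebra ℂ G) := MonoidAlgebra.of ℂ G (a * b) - MonoidAlgebra.of ℂ G (b * a)
  have hx : x ≠ 0 := by
    intro h
    exact hab (MonoidAlgebra.of_injective (sub_eq_zero.1 h))
  have : NeZero (Nat.card G : ℂ) := ⟨by exact_mod_cast Nat.card_pos.ne'⟩
  have hj : Module.jacobson (MonoidAlgebra ℂ G) (MonoidAlgebra ℂ G) = ⊥ := IsSemisimpleModule.jacobson_eq_bot (MonoidAlgebra ℂ G) (MonoidAlgebra ℂ G)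
  have hm : ∃ m : Submodule (MonoidAlgebra ℂ G) (MonoidAlgebra ℂ G), IsCoatom m ∧ x ∉ m := by
    by_contra hcon
    push Not at hcon
    apply hx
    have : x ∈ Module.jacobson (MonoidAlgebra ℂ G) (MonoidAlgebra ℂ G) := by
      unfold Module.jacobson
      rw [Submodule.mem_sInf]
      exact hcon
    rwa [hj, Submodule.mem_bot] at this
  obtain ⟨m, hmc, hxm⟩ := hm
  have : IsSimpleModule (MonoidAlgebra ℂ G) ((MonoidAlgebra ℂ G) ⧸ m) := isSimpleModule_iff_isCoatom.2 hmc
  refine exists_of_module a b ((MonoidAlgebra ℂ G) ⧸ m)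
    (Submodule.Quotient.mk (p := m) (1 : (MonoidAlgebra ℂ G))) ?_
  intro h3
  apply hxm
  rw [← Submodule.Quotient.mk_eq_zero]
  rw [← sub_eq_zero, ← sub_smul, ← Submodule.Quotient.mk_smul, smul_eq_mul, mul_one] at h3
  exact h3

/-- A nonabelian group of order `p^3` has `cod(G) = {1, p, p^2}`. -/
theorem nonabelian_p_cubed_codegrees (p : ℕ) (hp : p.Prime) (G : Type) [Group G] [Fintype G]
    (hcard : Fintype.card G = p ^ 3) (hna : ¬ ∀ a b : G, a * b = b * a) :
    codSet G = {1, p, p ^ 2} := by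
  have hfaith : ∀ V : FDRep ℂ G, Simple V → repKer V = ⊥ → codegree V = p ^ 2 := by
    intro V hV hK
    unfold codegree
    rw [degree_p hp hcard hna V hV hK, hK, Subgroup.index_bot, Nat.card_eq_fintype_card, hcard]
    exact Nat.div_eq_of_eq_mul_left hp.pos (by ring)
  ext m
  simp only [codSet, Set.mem_ofPred_eq, Set.mem_insert_iff, Set.mem_singleton_iff]
  constructor
  · rintro ⟨V, hV, rfl⟩
    by_cases hK : repKer V = ⊥
    · right; right; exact hfaith V hV hK
    · have hd := degree_one V hV (rho_comm hp hcard V hK)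
      unfold codegree
      rw [hd, Nat.div_one]
      exact index_of_ne_bot hp hcard _ hK
  · rintro (rfl | rfl | rfl)
    · obtain ⟨h1, h2⟩ := linRep_spec (1 : G →* ℂˣ)
      exact ⟨_, h1, by rw [h2]; simp⟩
    · obtain ⟨f, hf⟩ := exists_lin hp hcard
      obtain ⟨h1, h2⟩ := linRep_spec f
      exact ⟨_, h1, by rw [h2, hf]⟩
    · push Not at hna
      obtain ⟨a, b, hab⟩ := hna
      obtain ⟨V, hV, hne⟩ := exists_noncomm a b hab
      refine ⟨V, hV, hfaith V hV ?_⟩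
      by_contra hK
      exact hne (rho_comm hp hcard V hK a b)
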